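/- Let X be a length space, let Y be a nonempty subset of X, and let F : Y → ℝ be a Lipschitz function with inf_Y F > −∞. Then there exists an absolutely minimal (AM) extension u : X → ℝ of F. -/

import Mathlib

open Metric Set

noncomputable section

/-- The length of a continuous path: its total variation. -/
def pathLength {X : Type*} [MetricSpace X] {x y : X} (γ : Path x y) : ENNReal :=
  eVariationOn (fun t => γ t) (Set.univ : Set unitInterval)

/-- A metric space is a length space if the distance between any two points equals the
infimum of the lengths of continuous paths joining them. -/
def IsLengthSpace (X : Type*) [MetricSpace X] : Prop :=
  ∀ x y : X, edist x y = ⨅ γ : Path x y, pathLength γ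

/-- The (possibly infinite) Lipschitz constant of `u` on `S`:
`Lip_S u = sup {|u x - u y| / d(x,y) : x, y ∈ S, x ≠ y}`. -/
def lipOn {X : Type*} [MetricSpace X] (u : X → ℝ) (S : Set X) : ENNReal :=
  ⨆ (x : X) (_ : x ∈ S) (y : X) (_ : y ∈ S) (_ : x ≠ y),
    ENNReal.ofReal (|u x - u y| / dist x y)

/-- `u : X → ℝ` is an absolutely minimal (AM) extension of `F` prescribed on `Y`:
`u` is Lipschitz, `u = F` on `Y`, and `Lip_U u = Lip_{∂U} u` for every open `U ⊆ X \ Y`. -/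
def IsAMExtension {X : Type*} [MetricSpace X] (Y : Set X) (F u : X → ℝ) : Prop :=
  lipOn u Set.univ < ⊤ ∧ Set.EqOn u F Y ∧
    ∀ U : Set X, IsOpen U → U ⊆ Yᶜ → lipOn u U = lipOn u (frontier U)

/-!
In a length space an almost shortest path from a point of an open set `V` to a vertex outside `V`
crosses `frontier V`, so a downward cone and an upward cone with vertices outside `V` are ordered on
`V` as soon as they are on `frontier V`. Perron's method then applies with cones as barriers: the
largest function that lies below `F` on `Y` and compares with cones from above off `Y` also compares
with cones from below, since otherwise gluing in a downward cone would enlarge it. Comparison on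
both sides moves a Lipschitz bound from `frontier U` to `U`: first one point moves inside, by
comparison from below, and then the other, by comparison from above on `U` minus the first.
-/

open scoped NNReal

section Topology

variable {X : Type*} [TopologicalSpace X]

theorem frontier_diff_singleton_subset [T1Space X] (U : Set X) (x : X) :
    frontier (U \ {x}) ⊆ insert x (frontier U) := by
  intro p hp
  rcases frontier_inter_subset U {x}ᶜ hp with ⟨hpU, -⟩ | ⟨-, hpx⟩
  · exact Or.inr hpU
  · rw [frontier_compl] at hpx
    exact Or.inl (isClosed_singleton.frontier_subset hpx)

theorem eqOn_frontier_inter_setOf_lt {u c : X → ℝ} (hu : Continuous u) (hc : Continuous c)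
    {V : Set X} (hV : ∀ w ∈ frontier V, c w ≤ u w) :
    EqOn u c (frontier (V ∩ {x | u x < c x})) := by
  intro p hp
  rcases frontier_inter_subset V _ hp with ⟨hpV, hlt⟩ | ⟨-, hlt⟩
  · exact le_antisymm (closure_lt_subset_le hu hc hlt) (hV p hpV)
  · exact frontier_lt_subset_eq hu hc hlt

end Topology

section LengthSpace

variable {X : Type*} [MetricSpace X]

theorem edist_add_edist_le_pathLength {x y : X} (γ : Path x y) (t : unitInterval) :
    edist x (γ t) + edist (γ t) y ≤ pathLength γ := by
  have before : edist x (γ t) ≤ eVariationOn (fun s => γ s) (Iic t) := by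
    simpa only [γ.source] using
      eVariationOn.edist_le (fun s => γ s) (mem_Iic.2 (unitInterval.nonneg' (t := t))) self_mem_Iic
  have after : edist (γ t) y ≤ eVariationOn (fun s => γ s) (Ici t) := by
    simpa only [γ.target] using
      eVariationOn.edist_le (fun s => γ s) self_mem_Ici (mem_Ici.2 (unitInterval.le_one' (t := t)))
  calc
    edist x (γ t) + edist (γ t) y
      ≤ eVariationOn (fun s => γ s) (Iic t) + eVariationOn (fun s => γ s) (Ici t) :=
        add_le_add before after
    _ ≤ eVariationOn (fun s => γ s) (Iic t ∪ Ici t) :=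
        eVariationOn.add_le_union _ fun _ ha _ hb => le_trans ha hb
    _ ≤ pathLength γ := eVariationOn.mono _ (subset_univ _)

namespace IsLengthSpace

theorem exists_mem_frontier_dist_add_dist_le (hX : IsLengthSpace X) {V : Set X} {x z : X}
    (hx : x ∈ V) (hz : z ∉ V) {ε : ℝ} (hε : 0 < ε) :
    ∃ w ∈ frontier V, dist x w + dist w z ≤ dist x z + ε := by
  obtain ⟨γ, hγ⟩ : ∃ γ : Path x z, pathLength γ < ENNReal.ofReal (dist x z + ε) := by
    rw [← iInf_lt_iff, ← hX x z, edist_dist, ENNReal.ofReal_lt_ofReal_iff (by positivity)]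
    exact lt_add_of_pos_right _ hε
  obtain ⟨t, ht⟩ : (frontier (γ ⁻¹' V)).Nonempty := by
    refine nonempty_frontier_iff.2 ⟨⟨0, by simpa using hx⟩, fun h => hz ?_⟩
    simpa using h.ge (mem_univ 1)
  refine ⟨γ t, γ.continuous.frontier_preimage_subset V ht, ?_⟩
  have hlen := (edist_add_edist_le_pathLength γ t).trans hγ.le
  rwa [edist_dist, edist_dist, ← ENNReal.ofReal_add dist_nonneg dist_nonneg,
    ENNReal.ofReal_le_ofReal_iff (by positivity)] at hlen

theorem le_mul_dist_add_mul_dist_of_frontier (hX : IsLengthSpace X) {V : Set X} {z z' : X}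
    (hz : z ∉ V) (hz' : z' ∉ V) {b : ℝ} {L L' : ℝ≥0}
    (h : ∀ w ∈ frontier V, b ≤ L * dist w z + L' * dist w z') :
    ∀ x ∈ V, b ≤ L * dist x z + L' * dist x z' := by
  -- By symmetry `z` is the vertex of the steeper cone: moving towards it, the gain on that cone
  -- outweighs the loss on the other.
  wlog hLL' : L' ≤ L generalizing z z' L L'
  · intro x hx
    rw [add_comm]
    exact this hz' hz (fun w hw => by rw [add_comm]; exact h w hw) (le_of_not_ge hLL') x hx
  intro x hx
  refine le_of_forall_pos_le_add fun δ hδ => ?_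
  have hL : (0 : ℝ) < L + 1 := by positivity
  obtain ⟨w, hw, hdist⟩ := hX.exists_mem_frontier_dist_add_dist_le hx hz (div_pos hδ hL)
  have hLδ : L * (δ / (L + 1)) ≤ δ := by
    rw [mul_div_assoc', div_le_iff₀ hL]
    nlinarith
  have hwz : dist w z ≤ dist x z + δ / (L + 1) - dist x w := by linarith
  have hwz' : dist w z' ≤ dist x w + dist x z' := dist_comm x w ▸ dist_triangle w x z'
  calc
    b ≤ L * dist w z + L' * dist w z' := h w hw
    _ ≤ L * (dist x z + δ / (L + 1) - dist x w) + L' * (dist x w + dist x z') := by gcongr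
    _ = L * dist x z + L' * dist x z' + L * (δ / (L + 1)) - (L - L') * dist x w := by ring
    _ ≤ L * dist x z + L' * dist x z' + δ := by
      have : 0 ≤ ((L : ℝ) - L') * dist x w := mul_nonneg (sub_nonneg.2 hLL') dist_nonneg
      linarith

end IsLengthSpace

end LengthSpace

section ConeComparison

variable {X : Type*} [PseudoMetricSpace X] {Ω Ω' W : Set X} {u v : X → ℝ}

/-- `u` enjoys comparison with cones from above in `Ω`: on every open `V ⊆ Ω`, an upward cone with
vertex outside `V` which dominates `u` on `frontier V` dominates `u` on `V`. Neither `V` nor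
`frontier V` is assumed bounded. -/
def ConeComparisonAbove (Ω : Set X) (u : X → ℝ) : Prop :=
  ∀ V ⊆ Ω, IsOpen V → ∀ z ∉ V, ∀ (a : ℝ) (L : ℝ≥0),
    (∀ w ∈ frontier V, u w ≤ a + L * dist w z) → ∀ x ∈ V, u x ≤ a + L * dist x z

/-- `u` enjoys comparison with cones from below in `Ω`: on every open `V ⊆ Ω`, a downward cone with
vertex outside `V` which `u` dominates on `frontier V` is dominated by `u` on `V`. -/
def ConeComparisonBelow (Ω : Set X) (u : X → ℝ) : Prop :=
  ∀ V ⊆ Ω, IsOpen V → ∀ z ∉ V, ∀ (a : ℝ) (L : ℝ≥0),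
    (∀ w ∈ frontier V, a - L * dist w z ≤ u w) → ∀ x ∈ V, a - L * dist x z ≤ u x

theorem ConeComparisonBelow.mono (hu : ConeComparisonBelow Ω u) (hΩ : Ω' ⊆ Ω) :
    ConeComparisonBelow Ω' u :=
  fun V hV => hu V (hV.trans hΩ)

namespace ConeComparisonAbove

theorem mono (hu : ConeComparisonAbove Ω u) (hΩ : Ω' ⊆ Ω) : ConeComparisonAbove Ω' u :=
  fun V hV => hu V (hV.trans hΩ)

theorem of_isLUB {S : Set (X → ℝ)} (hS : ∀ h ∈ S, ConeComparisonAbove Ω h) (hu : IsLUB S u) :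
    ConeComparisonAbove Ω u := by
  intro V hVΩ hV z hz a L hfr x hx
  refine (isLUB_pi.1 hu x).2 ?_
  rintro _ ⟨h, hh, rfl⟩
  exact hS h hh V hVΩ hV z hz a L (fun w hw => (hu.1 hh w).trans (hfr w hw)) x hx

theorem piecewise [∀ x, Decidable (x ∈ W)] (hu : ConeComparisonAbove Ω u)
    (hv : ConeComparisonAbove W v) (hW : IsOpen W) (huv : ∀ x ∈ W, u x ≤ v x)
    (hfr : EqOn u v (frontier W)) : ConeComparisonAbove Ω (W.piecewise v u) := by
  intro V hVΩ hV z hz a L hV_le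
  have hle : u ≤ W.piecewise v u := le_piecewise huv fun _ _ => le_rfl
  have hclosure : EqOn (W.piecewise v u) v (closure W) := by
    intro p hp
    by_cases hpW : p ∈ W
    · exact piecewise_eq_of_mem _ _ _ hpW
    · rw [piecewise_eq_of_notMem _ _ _ hpW, hfr (hW.frontier_eq ▸ ⟨hp, hpW⟩)]
  have hu_le : ∀ x ∈ V, u x ≤ a + L * dist x z :=
    hu V hVΩ hV z hz a L fun w hw => (hle w).trans (hV_le w hw)
  have hv_frontier : ∀ w ∈ frontier (W ∩ V), v w ≤ a + L * dist w z := by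
    intro w hw
    rcases frontier_inter_subset W V hw with ⟨hwW, hwV⟩ | ⟨hwW, hwV⟩
    · rw [closure_eq_self_union_frontier] at hwV
      rw [← hfr hwW]
      exact hwV.elim (hu_le w) fun hwV => (hle w).trans (hV_le w hwV)
    · rw [← hclosure hwW]
      exact hV_le w hwV
  intro x hx
  by_cases hxW : x ∈ W
  · rw [piecewise_eq_of_mem _ _ _ hxW]
    exact hv (W ∩ V) inter_subset_left (hW.inter hV) z (fun h => hz h.2) a L hv_frontier x ⟨hxW, hx⟩
  · rw [piecewise_eq_of_notMem _ _ _ hxW]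
    exact hu_le x hx

end ConeComparisonAbove

end ConeComparison

section Extension

variable {X : Type*} [MetricSpace X] {U Y : Set X} {F u : X → ℝ} {K L : ℝ≥0}

namespace ConeComparisonAbove

theorem le_add_mul_dist_of_frontier (hu : ConeComparisonAbove U u) (hU : IsOpen U) {y : X}
    (hfr : ∀ w ∈ frontier U, u w ≤ u y + L * dist w y) :
    ∀ x ∈ U, u x ≤ u y + L * dist x y := by
  intro x hx
  rcases eq_or_ne x y with rfl | hxy
  · simp
  refine hu (U \ {y}) sdiff_subset (hU.sdiff isClosed_singleton) y (fun h => h.2 rfl) _ _ ?_ x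
    ⟨hx, hxy⟩
  intro w hw
  rcases frontier_diff_singleton_subset U y hw with rfl | hw
  · simp
  · exact hfr w hw

theorem lipschitzOnWith_of_frontier (hA : ConeComparisonAbove U u) (hB : ConeComparisonBelow U u)
    (hU : IsOpen U) (hfr : LipschitzOnWith L u (frontier U)) : LipschitzOnWith L u U := by
  have frontier_le : ∀ y ∈ U, ∀ w ∈ frontier U, u w ≤ u y + L * dist w y := by
    intro y hy w hw
    have hwU : w ∉ U := (hU.frontier_eq ▸ hw).2
    have := hB U subset_rfl hU w hwU (u w) L
      (fun p hp => by rw [dist_comm, sub_le_iff_le_add]; exact hfr.le_add_mul hw hp) y hy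
    rw [dist_comm]
    linarith
  exact LipschitzOnWith.of_le_add_mul L fun x hx y hy =>
    hA.le_add_mul_dist_of_frontier hU (frontier_le y hy) x hx

end ConeComparisonAbove

theorem IsLengthSpace.coneComparisonAbove_sub_mul_dist (hX : IsLengthSpace X) (a : ℝ) (L : ℝ≥0)
    (z : X) : ConeComparisonAbove {z}ᶜ fun x => a - L * dist x z := by
  intro V hVz _ z' hz' a' L' hfr x hx
  have hsum : ∀ w ∈ frontier V, a - a' ≤ L * dist w z + L' * dist w z' := fun w hw => by
    linarith only [hfr w hw]
  linarith only [hX.le_mul_dist_add_mul_dist_of_frontier (fun hz => hVz hz rfl) hz' hsum x hx]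

/-- The Perron class of the boundary data `F` on `Y`: the subsolutions off `Y`, in the sense of
comparison with cones from above, which lie below `F` on `Y`. Its greatest element is the
extension of `F` we are looking for. -/
def perronClass (Y : Set X) (F : X → ℝ) : Set (X → ℝ) :=
  {h | ConeComparisonAbove Yᶜ h ∧ ∀ y ∈ Y, h y ≤ F y}

theorem sub_mul_dist_mem_perronClass (hX : IsLengthSpace X) (hF : LipschitzOnWith K F Y) {y : X}
    (hy : y ∈ Y) : (fun x => F y - K * dist x y) ∈ perronClass Y F := by
  refine ⟨(hX.coneComparisonAbove_sub_mul_dist (F y) K y).mono ?_, fun x hx => ?_⟩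
  · exact compl_subset_compl.2 (singleton_subset_iff.2 hy)
  · have := hF.le_add_mul hy hx
    rw [dist_comm] at this
    linarith

theorem le_add_mul_dist_of_mem_perronClass (hY : IsClosed Y) (hF : LipschitzOnWith K F Y)
    {h : X → ℝ} (hh : h ∈ perronClass Y F) {y : X} (hy : y ∈ Y) (x : X) :
    h x ≤ F y + K * dist x y := by
  have hle : ∀ w ∈ Y, h w ≤ F y + K * dist w y := fun w hw =>
    (hh.2 w hw).trans (hF.le_add_mul hw hy)
  by_cases hx : x ∈ Y
  · exact hle x hx
  · refine hh.1 Yᶜ subset_rfl hY.isOpen_compl y (not_not_intro hy) _ _ (fun w hw => ?_) x hx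
    exact hle w (hY.frontier_subset (frontier_compl Y ▸ hw))

theorem exists_isGreatest_perronClass (hX : IsLengthSpace X) (hY : IsClosed Y)
    (hYne : Y.Nonempty) (hF : LipschitzOnWith K F Y) : ∃ u, IsGreatest (perronClass Y F) u := by
  obtain ⟨y, hy⟩ := hYne
  have hlub : IsLUB (perronClass Y F) (sSup (perronClass Y F)) :=
    isLUB_csSup ⟨_, sub_mul_dist_mem_perronClass hX hF hy⟩
      ⟨_, fun _ hh => le_add_mul_dist_of_mem_perronClass hY hF hh hy⟩
  refine ⟨_, ⟨.of_isLUB (fun h hh => hh.1) hlub, fun p hp => ?_⟩, hlub.1⟩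
  exact (isLUB_pi.1 hlub p).2 (forall_mem_image.2 fun h hh => hh.2 p hp)

theorem eqOn_of_isGreatest_perronClass (hX : IsLengthSpace X) (hF : LipschitzOnWith K F Y)
    (hu : IsGreatest (perronClass Y F) u) : EqOn u F Y := by
  intro y hy
  refine le_antisymm (hu.1.2 y hy) ?_
  simpa using hu.2 (sub_mul_dist_mem_perronClass hX hF hy) y

theorem lipschitzWith_of_isGreatest_perronClass (hX : IsLengthSpace X) (hY : IsClosed Y)
    (hF : LipschitzOnWith K F Y) (hu : IsGreatest (perronClass Y F) u) : LipschitzWith K u := by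
  refine LipschitzWith.of_le_add_mul K fun x y => ?_
  have hle : ∀ w ∈ Y, u w ≤ u y + K * dist w y := by
    intro w hw
    have hcone := hu.2 (sub_mul_dist_mem_perronClass hX hF hw) y
    rw [dist_comm] at hcone
    linarith [hu.1.2 w hw]
  by_cases hx : x ∈ Y
  · exact hle x hx
  · refine hu.1.1.le_add_mul_dist_of_frontier hY.isOpen_compl (fun w hw => ?_) x hx
    exact hle w (hY.frontier_subset (frontier_compl Y ▸ hw))

theorem coneComparisonBelow_of_isGreatest_perronClass (hX : IsLengthSpace X)
    (hu : IsGreatest (perronClass Y F) u) (huc : Continuous u) : ConeComparisonBelow Yᶜ u := by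
  classical
  intro V hVY hV z hz a L hfr x hx
  by_contra! hlt
  set c : X → ℝ := fun x => a - L * dist x z
  have hc : Continuous c := by fun_prop
  set W : Set X := V ∩ {x | u x < c x}
  have hcW : ConeComparisonAbove W c :=
    (hX.coneComparisonAbove_sub_mul_dist a L z).mono
      (subset_compl_singleton_iff.2 fun hzW => hz hzW.1)
  have hmem : W.piecewise c u ∈ perronClass Y F := by
    refine ⟨hu.1.1.piecewise hcW (hV.inter (isOpen_lt huc hc)) (fun _ hp => hp.2.le)
      (eqOn_frontier_inter_setOf_lt huc hc hfr), fun y hy => ?_⟩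
    rw [piecewise_eq_of_notMem _ _ _ fun hyW => hVY hyW.1 hy]
    exact hu.1.2 y hy
  have hxu : W.piecewise c u x ≤ u x := hu.2 hmem x
  rw [piecewise_eq_of_mem W c u ⟨hx, hlt⟩] at hxu
  exact hlt.not_ge hxu

theorem lipOn_le_coe_iff {S : Set X} : lipOn u S ≤ L ↔ LipschitzOnWith L u S := by
  simp only [lipOn, iSup_le_iff, lipschitzOnWith_iff_dist_le_mul, Real.dist_eq]
  refine forall₄_congr fun x _ y _ => ?_
  rcases eq_or_ne x y with rfl | hxy
  · simp
  · simp [hxy, ENNReal.ofReal_le_iff_le_toReal, div_le_iff₀ (dist_pos.2 hxy)]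

theorem lipOn_eq_lipOn_frontier (hu : ContinuousOn u (closure U)) (hU : IsOpen U)
    (hA : ConeComparisonAbove U u) (hB : ConeComparisonBelow U u) :
    lipOn u U = lipOn u (frontier U) := by
  have hiff (L : ℝ≥0) : LipschitzOnWith L u U ↔ LipschitzOnWith L u (frontier U) :=
    ⟨fun h => ((lipschitzOnWith_closure_iff hu).2 h).mono frontier_subset_closure,
      hA.lipschitzOnWith_of_frontier hB hU⟩
  refine eq_of_forall_ge_iff (ENNReal.forall_ennreal.2 ⟨fun L => ?_, by simp only [le_top]⟩)
  rw [lipOn_le_coe_iff, lipOn_le_coe_iff, hiff]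

theorem stmt1_general (hX : IsLengthSpace X) (hY : Y.Nonempty)
    (hF : ∃ K : ℝ≥0, LipschitzOnWith K F Y) : ∃ u : X → ℝ, IsAMExtension Y F u := by
  obtain ⟨K, hK⟩ := hF
  obtain ⟨G, hG, hFG⟩ := hK.extend_real
  have hGY : LipschitzOnWith K G (closure Y) := hG.lipschitzOnWith
  obtain ⟨u, hu⟩ := exists_isGreatest_perronClass hX isClosed_closure hY.closure hGY
  have huK : LipschitzWith K u := lipschitzWith_of_isGreatest_perronClass hX isClosed_closure hGY hu
  have huG : EqOn u G (closure Y) := eqOn_of_isGreatest_perronClass hX hGY hu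
  have hB := coneComparisonBelow_of_isGreatest_perronClass hX hu huK.continuous
  refine ⟨u, ?_, (huG.mono subset_closure).trans hFG.symm, fun U hU hUY => ?_⟩
  · exact (lipOn_le_coe_iff.2 huK.lipschitzOnWith).trans_lt ENNReal.coe_lt_top
  · have hUY' : U ⊆ (closure Y)ᶜ :=
      (subset_compl_iff_disjoint_right.1 hUY).closure_right hU |>.subset_compl_right
    exact lipOn_eq_lipOn_frontier huK.continuous.continuousOn hU (hu.1.1.mono hUY') (hB.mono hUY')

end Extension

/-- Every Lipschitz function `F` on a nonempty subset `Y` of a length space `X` that is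
bounded below admits an absolutely minimal extension to `X`. -/
theorem stmt1 {X : Type*} [MetricSpace X] (hX : IsLengthSpace X)
    (Y : Set X) (hY : Y.Nonempty) (F : X → ℝ)
    (hFlip : ∃ K : NNReal, LipschitzOnWith K F Y)
    (hFbelow : ∃ m : ℝ, ∀ y ∈ Y, m ≤ F y) :
    ∃ u : X → ℝ, IsAMExtension Y F u :=
  stmt1_general hX hY hFlip

end
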